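/- Let M have Gorenstein (L,A)-projective resolution dimension n, i.e., there is an exact sequence 0 → Gₙ → ⋯ → G₀ → M → 0 with all Gᵢ Gorenstein (L,A)-projective. Then for every exact sequence 0 → Kₙ → Pₙ₋₁ → ⋯ → P₀ → M → 0 with all Pᵢ projective, the kernel Kₙ is Gorenstein (L,A)-projective. -/

import Mathlib

/-!
Call `M` left orthogonal to `𝓛` if `Ext^i(M, L) = 0` for all `L ∈ 𝓛` and `i ≥ 1`. The Gorenstein
`(𝓛, 𝓐)`-projectives form the largest class of left orthogonal modules each of which embeds in a
projective module with cokernel again in the class: iterating the embeddings to the right and taking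
kernels of epimorphisms from projectives to the left gives a complete resolution, and orthogonality
of its cycles yields `Hom(-, 𝓛)`-exactness (`isGProj_of_coresolving`, with converses `IsGProj.extPerp` and
`IsGProj.coresolve`).

All projectives lie in `𝓛`, so `Ext¹(C, P) = 0` for `C` Gorenstein projective and `P` projective.
This allows a horseshoe construction of embeddings into projectives, and the coinduction principle
gives closure under extensions (`isGProj_ext`), from which closure under kernels of epimorphisms
follows (`isGProj_ker`).

The theorem is then an induction on `n`. Given `0 → K₁ → G → M → 0` starting the Gorenstein
projective resolution and `0 → S → P → M → 0` with `P` projective, there is a short exact sequence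
`0 → S → K₁ × P → G → 0` (`exists_ses_prod`). Since `K₁` has resolution dimension at most `n`, so
does `S` (`resDimLE_ker`), and the induction hypothesis applies to `S`.
-/

open CategoryTheory CategoryTheory.Limits DirectSum

namespace DualityPaper

variable {R : Type} [Ring R]

/-- The right `R`-module structure on the group of additive maps out of a left `R`-module,
given by `(f • r) m = f (r • m)`. -/
instance charModuleRight (M A : Type) [AddCommGroup M] [AddCommGroup A] [Module R M] :
    Module Rᵐᵒᵖ (M →+ A) where
  smul r f := f.comp (DistribMulAction.toAddMonoidHom M r.unop)
  one_smul f := AddMonoidHom.ext fun m => by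
    show f ((1 : Rᵐᵒᵖ).unop • m) = f m
    simp
  mul_smul r s f := AddMonoidHom.ext fun m => by
    show f ((r * s).unop • m) = f (s.unop • r.unop • m)
    rw [MulOpposite.unop_mul, mul_smul]
  smul_zero r := rfl
  smul_add r f g := rfl
  add_smul r s f := AddMonoidHom.ext fun m => by
    show f ((r + s).unop • m) = f (r.unop • m) + f (s.unop • m)
    rw [MulOpposite.unop_add, add_smul, map_add]
  zero_smul f := AddMonoidHom.ext fun m => by
    show f ((0 : Rᵐᵒᵖ).unop • m) = 0
    simp

/-- The left `R`-module structure on the group of additive maps out of a right `R`-module. -/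
instance charModuleLeft (N A : Type) [AddCommGroup N] [AddCommGroup A] [Module Rᵐᵒᵖ N] :
    Module R (N →+ A) where
  smul r f := f.comp (DistribMulAction.toAddMonoidHom N (MulOpposite.op r))
  one_smul f := AddMonoidHom.ext fun m => by
    show f ((MulOpposite.op (1 : R)) • m) = f m
    simp
  mul_smul r s f := AddMonoidHom.ext fun m => by
    show f (MulOpposite.op (r * s) • m) = f (MulOpposite.op s • MulOpposite.op r • m)
    rw [MulOpposite.op_mul, mul_smul]
  smul_zero r := rfl
  smul_add r f g := rfl
  add_smul r s f := AddMonoidHom.ext fun m => by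
    show f (MulOpposite.op (r + s) • m) = f (MulOpposite.op r • m) + f (MulOpposite.op s • m)
    rw [MulOpposite.op_add, add_smul, map_add]
  zero_smul f := AddMonoidHom.ext fun m => by
    show f (MulOpposite.op (0 : R) • m) = 0
    simp

/-- The character module `M⁺ = Hom_ℤ(M, ℚ/ℤ)` of a left module, as a right module. -/
def charL (M : ModuleCat.{0} R) : ModuleCat.{0} Rᵐᵒᵖ :=
  ModuleCat.of Rᵐᵒᵖ (M →+ AddCircle (1 : ℚ))

/-- The character module `N⁺ = Hom_ℤ(N, ℚ/ℤ)` of a right module, as a left module. -/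
def charR (N : ModuleCat.{0} Rᵐᵒᵖ) : ModuleCat.{0} R :=
  ModuleCat.of R (N →+ AddCircle (1 : ℚ))

/-- A left module over a (possibly noncommutative) ring is flat iff its character module is an
injective right module (Lambek); we take this as the definition of flatness. -/
def IsFlatMod (M : ModuleCat.{0} R) : Prop := CategoryTheory.Injective (charL M)

/-- `f`, `g` form a short exact sequence `0 → A → B → C → 0`. -/
def SES {A B C : ModuleCat.{0} R} (f : A ⟶ B) (g : B ⟶ C) : Prop :=
  ∃ w : f ≫ g = 0, (ShortComplex.mk f g w).ShortExact

/-- Vanishing of `Ext^n_R(M, N)`. -/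
def ExtVanish (n : ℕ) (M N : ModuleCat.{0} R) : Prop :=
  Subsingleton (((_root_.Ext ℤ (ModuleCat.{0} R) n).obj (Opposite.op M)).obj N)

/-- A complete duality pair `(𝓛, 𝓐)` over `R`. -/
structure CompleteDualityPair (𝓛 : Set (ModuleCat.{0} R)) (𝓐 : Set (ModuleCat.{0} Rᵐᵒᵖ)) :
    Prop where
  isoClosed_L : ∀ {M N : ModuleCat.{0} R}, (M ≅ N) → M ∈ 𝓛 → N ∈ 𝓛
  isoClosed_A : ∀ {M N : ModuleCat.{0} Rᵐᵒᵖ}, (M ≅ N) → M ∈ 𝓐 → N ∈ 𝓐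
  char_mem_iff : ∀ M : ModuleCat.{0} R, M ∈ 𝓛 ↔ charL M ∈ 𝓐
  char_mem_iff' : ∀ N : ModuleCat.{0} Rᵐᵒᵖ, N ∈ 𝓐 ↔ charR N ∈ 𝓛
  summands_A : ∀ A ∈ 𝓐, ∀ (B : ModuleCat.{0} Rᵐᵒᵖ) (i : B ⟶ A) (p : A ⟶ B),
    i ≫ p = 𝟙 B → B ∈ 𝓐
  sums_A : ∀ A B : ModuleCat.{0} Rᵐᵒᵖ, A ∈ 𝓐 → B ∈ 𝓐 → ModuleCat.of Rᵐᵒᵖ (A × B) ∈ 𝓐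
  summands_L : ∀ L ∈ 𝓛, ∀ (K : ModuleCat.{0} R) (i : K ⟶ L) (p : L ⟶ K),
    i ≫ p = 𝟙 K → K ∈ 𝓛
  sums_L : ∀ L K : ModuleCat.{0} R, L ∈ 𝓛 → K ∈ 𝓛 → ModuleCat.of R (L × K) ∈ 𝓛
  self_mem : ModuleCat.of R R ∈ 𝓛
  coprod_L : ∀ (ι : Type) (f : ι → ModuleCat.{0} R), (∀ i, f i ∈ 𝓛) →
    ModuleCat.of R (⨁ i, f i) ∈ 𝓛
  ext_L : ∀ {A B C : ModuleCat.{0} R} (f : A ⟶ B) (g : B ⟶ C),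
    SES f g → A ∈ 𝓛 → C ∈ 𝓛 → B ∈ 𝓛

/-- A doubly infinite exact sequence of projectives which stays exact after applying
`Hom_R(-, T)` for every `T` in the class `𝓣`. -/
structure IsTotallyAcyclicWrt (𝓣 : Set (ModuleCat.{0} R))
    (C : ChainComplex (ModuleCat.{0} R) ℤ) : Prop where
  projective : ∀ n, Projective (C.X n)
  exact : ∀ n, (C.sc n).Exact
  homExact : ∀ T ∈ 𝓣, ∀ (n : ℤ) (g : C.X n ⟶ T), C.d (n + 1) n ≫ g = 0 →
    ∃ h : C.X (n - 1) ⟶ T, C.d n (n - 1) ≫ h = g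

/-- `M` is Gorenstein projective relative to the class `𝓣`:  it is a kernel in a
`Hom_R(-, 𝓣)`-exact exact sequence of projective modules. -/
def IsGProj (𝓣 : Set (ModuleCat.{0} R)) (M : ModuleCat.{0} R) : Prop :=
  ∃ C : ChainComplex (ModuleCat.{0} R) ℤ, IsTotallyAcyclicWrt 𝓣 C ∧
    ∃ n : ℤ, Nonempty (M ≅ kernel (C.d n (n - 1)))

/-- `M` is strongly Gorenstein `(𝓛,𝓐)`-projective. -/
def IsSGProj (𝓣 : Set (ModuleCat.{0} R)) (M : ModuleCat.{0} R) : Prop :=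
  ∃ (P : ModuleCat.{0} R) (f : P ⟶ P), Projective P ∧
    (∃ w : f ≫ f = 0, (ShortComplex.mk f f w).Exact) ∧
    (∀ T ∈ 𝓣, ∀ g : P ⟶ T, f ≫ g = 0 → ∃ h : P ⟶ T, f ≫ h = g) ∧
    Nonempty (M ≅ kernel f)

/-- Resolution dimension of `M` with respect to a class `𝓒` is at most `n`. -/
def ResDimLE (𝓒 : Set (ModuleCat.{0} R)) : ℕ → ModuleCat.{0} R → Prop
  | 0, M => M ∈ 𝓒
  | n + 1, M => ∃ (K C : ModuleCat.{0} R) (f : K ⟶ C) (g : C ⟶ M),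
      C ∈ 𝓒 ∧ SES f g ∧ ResDimLE 𝓒 n K

/-- `K` is an `n`-th kernel of an exact sequence `0 → K → C_{n-1} → ⋯ → C₀ → M → 0`
with all `Cᵢ` in `𝓒`. -/
def IsNthSyzygy (𝓒 : Set (ModuleCat.{0} R)) : ℕ → ModuleCat.{0} R → ModuleCat.{0} R → Prop
  | 0, M, K => Nonempty (K ≅ M)
  | n + 1, M, K => ∃ (S C : ModuleCat.{0} R) (f : S ⟶ C) (g : C ⟶ M),
      C ∈ 𝓒 ∧ SES f g ∧ IsNthSyzygy 𝓒 n S K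

/-- A left Frobenius pair `(𝓧, ω)`. -/
structure LeftFrobeniusPair (𝓧 ω : Set (ModuleCat.{0} R)) : Prop where
  summands_X : ∀ X ∈ 𝓧, ∀ (Y : ModuleCat.{0} R) (i : Y ⟶ X) (p : X ⟶ Y),
    i ≫ p = 𝟙 Y → Y ∈ 𝓧
  extensions_X : ∀ {A B C : ModuleCat.{0} R} (f : A ⟶ B) (g : B ⟶ C),
    SES f g → A ∈ 𝓧 → C ∈ 𝓧 → B ∈ 𝓧
  kerEpi_X : ∀ {A B C : ModuleCat.{0} R} (f : A ⟶ B) (g : B ⟶ C),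
    SES f g → B ∈ 𝓧 → C ∈ 𝓧 → A ∈ 𝓧
  subset : ω ⊆ 𝓧
  inj : ∀ X ∈ 𝓧, ∀ W ∈ ω, ∀ i : ℕ, 1 ≤ i → ExtVanish i X W
  cogen : ∀ X ∈ 𝓧, ∃ (W X' : ModuleCat.{0} R) (f : X ⟶ W) (g : W ⟶ X'),
    W ∈ ω ∧ X' ∈ 𝓧 ∧ SES f g
  summands_ω : ∀ W ∈ ω, ∀ (V : ModuleCat.{0} R) (i : V ⟶ W) (p : W ⟶ V),
    i ≫ p = 𝟙 V → V ∈ ω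


/-! ### Short exact sequences and orthogonality -/

lemma ses_iff {A B C : ModuleCat.{0} R} (f : A ⟶ B) (g : B ⟶ C) :
    SES f g ↔ Function.Injective f ∧ (∀ x, g x = 0 ↔ ∃ a, f a = x) ∧ Function.Surjective g := by
  constructor
  · rintro ⟨w, h⟩
    exact ⟨h.moduleCat_injective_f,
      (ShortComplex.ShortExact.moduleCat_exact_iff_function_exact _).1 h.exact,
      h.moduleCat_surjective_g⟩
  · rintro ⟨h₁, h₂, h₃⟩
    have w : f ≫ g = 0 := by
      ext a
      exact (h₂ (f a)).2 ⟨a, rfl⟩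
    exact ⟨w, ModuleCat.shortComplex_shortExact _ h₂ h₁ h₃⟩

lemma ses_ker {B C : ModuleCat.{0} R} (g : B ⟶ C) (hg : Function.Surjective g) :
    SES (ModuleCat.ofHom (LinearMap.ker g.hom).subtype) g := by
  rw [ses_iff]
  refine ⟨Subtype.val_injective, fun x => ⟨fun h => ⟨⟨x, h⟩, rfl⟩, ?_⟩, hg⟩
  rintro ⟨a, rfl⟩
  exact a.2

lemma ses_mkQ {A B : ModuleCat.{0} R} (f : A ⟶ B) (hf : Function.Injective f) :
    SES f (ModuleCat.ofHom (LinearMap.range f.hom).mkQ) := by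
  rw [ses_iff]
  refine ⟨hf, fun x => ?_, Submodule.mkQ_surjective _⟩
  exact Submodule.Quotient.mk_eq_zero _

lemma ses_desc {A B C T : ModuleCat.{0} R} {f : A ⟶ B} {g : B ⟶ C} (h : SES f g) (u : B ⟶ T)
    (hu : f ≫ u = 0) : ∃ v : C ⟶ T, g ≫ v = u := by
  obtain ⟨w, h⟩ := h
  have := h.epi_g
  exact ⟨h.exact.desc u hu, h.exact.g_desc u hu⟩

lemma ses_lift {A B C T : ModuleCat.{0} R} {f : A ⟶ B} {g : B ⟶ C} (h : SES f g) (u : T ⟶ B)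
    (hu : u ≫ g = 0) : ∃ v : T ⟶ A, v ≫ f = u := by
  obtain ⟨w, h⟩ := h
  have := h.mono_f
  exact ⟨h.exact.lift u hu, h.exact.lift_f u hu⟩

/-- `M` is left orthogonal to the class `𝓣`: `Ext^i(M, T) = 0` for all `T ∈ 𝓣` and `i ≥ 1`. -/
def ExtPerp (𝓣 : Set (ModuleCat.{0} R)) (M : ModuleCat.{0} R) : Prop :=
  ∀ T ∈ 𝓣, ∀ i : ℕ, Subsingleton (Abelian.Ext.{0} M T (i + 1))

lemma extPerp_of_projective (𝓣 : Set (ModuleCat.{0} R)) (P : ModuleCat.{0} R) [Projective P] :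
    ExtPerp 𝓣 P := fun T _ i => Abelian.Ext.subsingleton_of_projective P T i

lemma extPerp_of_iso {𝓣 : Set (ModuleCat.{0} R)} {M N : ModuleCat.{0} R} (e : M ≅ N)
    (h : ExtPerp 𝓣 N) : ExtPerp 𝓣 M := by
  intro T hT i
  have := h T hT i
  refine subsingleton_of_forall_eq 0 fun x => ?_
  have : (Abelian.Ext.mk₀ e.inv).comp x (zero_add _) = 0 := Subsingleton.elim _ _
  have h2 := congrArg (fun y => (Abelian.Ext.mk₀ e.hom).comp y (zero_add _)) this
  simpa using h2

lemma extPerp_left {𝓣 : Set (ModuleCat.{0} R)} {A B C : ModuleCat.{0} R} {f : A ⟶ B} {g : B ⟶ C}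
    (h : SES f g) (hB : ExtPerp 𝓣 B) (hC : ExtPerp 𝓣 C) : ExtPerp 𝓣 A := by
  obtain ⟨w, h⟩ := h
  intro T hT i
  have := hB T hT i
  have := hC T hT (i + 1)
  refine subsingleton_of_forall_eq 0 fun x => ?_
  obtain ⟨y, rfl⟩ := Abelian.Ext.contravariant_sequence_exact₁ h T x (n₁ := i + 1 + 1) (by omega)
    (Subsingleton.elim (α := Abelian.Ext.{0} C T (i + 1 + 1)) _ _)
  rw [Subsingleton.elim (α := Abelian.Ext.{0} B T (i + 1)) y 0, Abelian.Ext.comp_zero]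

lemma extPerp_mid {𝓣 : Set (ModuleCat.{0} R)} {A B C : ModuleCat.{0} R} {f : A ⟶ B} {g : B ⟶ C}
    (h : SES f g) (hA : ExtPerp 𝓣 A) (hC : ExtPerp 𝓣 C) : ExtPerp 𝓣 B := by
  obtain ⟨w, h⟩ := h
  intro T hT i
  have := hA T hT i
  have := hC T hT i
  refine subsingleton_of_forall_eq 0 fun x => ?_
  obtain ⟨y, rfl⟩ := Abelian.Ext.contravariant_sequence_exact₂ h T x
    (Subsingleton.elim (α := Abelian.Ext.{0} A T (i + 1)) _ _)
  rw [Subsingleton.elim (α := Abelian.Ext.{0} C T (i + 1)) y 0, Abelian.Ext.comp_zero]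

lemma ses_extend {T A B C : ModuleCat.{0} R} {f : A ⟶ B} {g : B ⟶ C}
    (h : SES f g) (hC : Subsingleton (Abelian.Ext.{0} C T 1)) (u : A ⟶ T) :
    ∃ v : B ⟶ T, f ≫ v = u := by
  obtain ⟨w, h⟩ := h
  obtain ⟨y, hy⟩ := Abelian.Ext.contravariant_sequence_exact₁ h T (Abelian.Ext.mk₀ u) (n₁ := 1)
    (by omega) (Subsingleton.elim (α := Abelian.Ext.{0} C T 1) _ _)
  obtain ⟨v, rfl⟩ := (Abelian.Ext.mk₀_bijective _ _).2 y
  refine ⟨v, (Abelian.Ext.mk₀_bijective _ _).1 ?_⟩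
  simpa using hy

/-- Converse to `ses_extend`: one presentation with projective middle term suffices to test
`Ext¹(C, T) = 0`. -/
lemma ext_one_of_extend {T A B C : ModuleCat.{0} R} {f : A ⟶ B} {g : B ⟶ C}
    (h : SES f g) [Projective B] (hu : ∀ u : A ⟶ T, ∃ v : B ⟶ T, f ≫ v = u) :
    Subsingleton (Abelian.Ext.{0} C T 1) := by
  obtain ⟨w, h⟩ := h
  have := Abelian.Ext.subsingleton_of_projective B T 0
  refine subsingleton_of_forall_eq 0 fun x => ?_
  obtain ⟨y, rfl⟩ := Abelian.Ext.contravariant_sequence_exact₃ h T x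
    (Subsingleton.elim (α := Abelian.Ext.{0} B T 1) _ _) (n₀ := 0) (by omega)
  obtain ⟨u, rfl⟩ := (Abelian.Ext.mk₀_bijective _ _).2 y
  obtain ⟨v, rfl⟩ := hu u
  rw [← Abelian.Ext.mk₀_comp_mk₀]
  exact h.extClass_comp_assoc _

lemma ext_succ_of_ext {T A B C : ModuleCat.{0} R} {f : A ⟶ B} {g : B ⟶ C}
    (h : SES f g) [Projective B] (i : ℕ) (hA : Subsingleton (Abelian.Ext.{0} A T (i + 1))) :
    Subsingleton (Abelian.Ext.{0} C T (i + 1 + 1)) := by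
  obtain ⟨w, h⟩ := h
  have := Abelian.Ext.subsingleton_of_projective B T (i + 1)
  refine subsingleton_of_forall_eq 0 fun x => ?_
  obtain ⟨y, rfl⟩ := Abelian.Ext.contravariant_sequence_exact₃ h T x
    (Subsingleton.elim (α := Abelian.Ext.{0} B T (i + 1 + 1)) _ _) (n₀ := i + 1) (by omega)
  rw [Subsingleton.elim (α := Abelian.Ext.{0} A T (i + 1)) y 0, Abelian.Ext.comp_zero]

/-- `𝓛` contains `R`, coproducts and direct summands, hence every projective module. -/
lemma projective_mem {𝓛 : Set (ModuleCat.{0} R)} {𝓐 : Set (ModuleCat.{0} Rᵐᵒᵖ)}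
    (hdp : CompleteDualityPair 𝓛 𝓐) (P : ModuleCat.{0} R) [Projective P] : P ∈ 𝓛 := by
  classical
  have hF := hdp.coprod_L P (fun _ => ModuleCat.of R R) (fun _ => hdp.self_mem)
  let q : ModuleCat.of R (⨁ _ : P, (ModuleCat.of R R : ModuleCat.{0} R)) ⟶ P :=
    ModuleCat.ofHom (DirectSum.toModule R P P fun p => LinearMap.toSpanSingleton R P p)
  have hq : Function.Surjective q := by
    intro p
    refine ⟨DirectSum.lof R P (fun _ => (ModuleCat.of R R : ModuleCat.{0} R)) p (1 : R), ?_⟩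
    change DirectSum.toModule R P P _ _ = _
    rw [DirectSum.toModule_lof]
    simp
  have : Epi q := (ModuleCat.epi_iff_surjective q).2 hq
  exact hdp.summands_L _ hF P (Projective.factorThru (𝟙 P) q) q (Projective.factorThru_comp _ _)

/-! ### Gorenstein projectives as a coinductively defined class -/

/-- The cycles `Z_n = ker (C_n → C_{n-1})` of a complex, in the indexing used by `IsGProj`. -/
noncomputable abbrev cyc (C : ChainComplex (ModuleCat.{0} R) ℤ) (n : ℤ) : ModuleCat.{0} R :=
  kernel (C.d n (n - 1))

lemma exact_elem {C : ChainComplex (ModuleCat.{0} R) ℤ} (hC : ∀ n, (C.sc n).Exact) (a b c : ℤ)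
    (hab : b + 1 = a) (hbc : c + 1 = b) (x : C.X b) (hx : C.d b c x = 0) :
    ∃ y : C.X a, C.d a b y = x := by
  have h : C.ExactAt b := hC b
  rw [HomologicalComplex.exactAt_iff' C a b c (ChainComplex.prev ℤ b ▸ hab)
    ((ComplexShape.down ℤ).next_eq' hbc)] at h
  rw [ShortComplex.moduleCat_exact_iff] at h
  exact h x hx

/-- An exact complex of modules breaks into short exact sequences `0 → Z_n → C_n → Z_{n-1} → 0`;
the second map is a corestriction of the differential. -/
lemma ses_cyc {C : ChainComplex (ModuleCat.{0} R) ℤ} (hC : ∀ n, (C.sc n).Exact) (n m : ℤ)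
    (hm : m + 1 = n) :
    ∃ g : C.X n ⟶ cyc C m, g ≫ kernel.ι (C.d m (m - 1)) = C.d n m ∧
      SES (kernel.ι (C.d n (n - 1))) g := by
  refine ⟨kernel.lift _ (C.d n m) (C.d_comp_d _ _ _), kernel.lift_ι _ _ _, ?_⟩
  obtain rfl : m = n - 1 := by omega
  set g := kernel.lift (C.d (n - 1) (n - 1 - 1)) (C.d n (n - 1)) (C.d_comp_d _ _ _) with hg
  have hg' : g ≫ kernel.ι _ = C.d n (n - 1) := kernel.lift_ι _ _ _
  have hi : ∀ k, Function.Injective (kernel.ι (C.d k (k - 1))) := fun k =>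
    (ModuleCat.mono_iff_injective _).1 inferInstance
  have key : ∀ x, kernel.ι (C.d (n - 1) (n - 1 - 1)) (g x) = C.d n (n - 1) x := fun x => by
    rw [← hg']; rfl
  rw [ses_iff]
  refine ⟨hi n, fun x => ⟨fun hx => ?_, ?_⟩, fun z => ?_⟩
  · have hx' : C.d n (n - 1) x = 0 := by rw [← key, hx, map_zero]
    obtain ⟨y, rfl⟩ := exact_elem hC (n + 1) n (n - 1) rfl (by omega) x hx'
    refine ⟨kernel.lift (C.d n (n - 1)) (C.d (n + 1) n) (C.d_comp_d _ _ _) y, ?_⟩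
    rw [← ModuleCat.comp_apply, kernel.lift_ι]
  · rintro ⟨a, rfl⟩
    apply hi
    rw [key, map_zero, ← ModuleCat.comp_apply, kernel.condition]
    rfl
  · have hz : C.d (n - 1) (n - 1 - 1) (kernel.ι (C.d (n - 1) (n - 1 - 1)) z) = 0 := by
      rw [← ModuleCat.comp_apply, kernel.condition]
      rfl
    obtain ⟨y, hy⟩ := exact_elem hC n (n - 1) (n - 1 - 1) (by omega) (by omega) _ hz
    exact ⟨y, hi _ (by rw [key, hy])⟩

lemma homExact' {𝓣 : Set (ModuleCat.{0} R)} {C : ChainComplex (ModuleCat.{0} R) ℤ}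
    (hC : IsTotallyAcyclicWrt 𝓣 C) {T : ModuleCat.{0} R} (hT : T ∈ 𝓣) (a b c : ℤ)
    (hab : b + 1 = a) (hbc : c + 1 = b) (g : C.X b ⟶ T) (hg : C.d a b ≫ g = 0) :
    ∃ h : C.X c ⟶ T, C.d b c ≫ h = g := by
  obtain rfl : c = b - 1 := by omega
  subst hab
  exact hC.homExact T hT b g hg

/-- Cycles of a totally acyclic complex are left orthogonal to `𝓣`: in degree one this is exactly
`Hom(-, T)`-exactness, and the higher degrees follow by dimension shifting. -/
lemma ext_cyc {𝓣 : Set (ModuleCat.{0} R)} {C : ChainComplex (ModuleCat.{0} R) ℤ}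
    (hC : IsTotallyAcyclicWrt 𝓣 C) {T : ModuleCat.{0} R} (hT : T ∈ 𝓣) (i : ℕ) :
    ∀ n : ℤ, Subsingleton (Abelian.Ext.{0} (cyc C n) T (i + 1)) := by
  induction i with
  | zero =>
    intro n
    obtain ⟨g, hg, hs⟩ := ses_cyc hC.exact (n + 1) n rfl
    have := hC.projective (n + 1)
    refine ext_one_of_extend hs fun u => ?_
    obtain ⟨q, hq, hs'⟩ := ses_cyc hC.exact (n + 1 + 1) (n + 1) rfl
    obtain ⟨v, hv⟩ := homExact' hC hT (n + 1 + 1 + 1) (n + 1 + 1) (n + 1) rfl rfl (q ≫ u) (by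
      rw [← Category.assoc]
      have : C.d (n + 1 + 1 + 1) (n + 1 + 1) ≫ q = 0 := by
        rw [← cancel_mono (kernel.ι (C.d (n + 1) (n + 1 - 1))), Category.assoc, hq, C.d_comp_d,
          zero_comp]
      rw [this, zero_comp])
    refine ⟨v, ?_⟩
    have : Epi q := (ModuleCat.epi_iff_surjective q).2 ((ses_iff _ _).1 hs').2.2
    rw [← cancel_epi q, ← Category.assoc, hq, hv]
  | succ i ih =>
    intro n
    obtain ⟨g, hg, hs⟩ := ses_cyc hC.exact (n + 1) n rfl
    have := hC.projective (n + 1)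
    exact ext_succ_of_ext hs i (ih (n + 1))

lemma IsGProj.extPerp {𝓣 : Set (ModuleCat.{0} R)} {M : ModuleCat.{0} R} (h : IsGProj 𝓣 M) :
    ExtPerp 𝓣 M := by
  obtain ⟨C, hC, n, ⟨e⟩⟩ := h
  exact extPerp_of_iso e fun T hT i => ext_cyc hC hT i n

lemma ses_iso_left {A A' B C : ModuleCat.{0} R} {f : A ⟶ B} {g : B ⟶ C} (h : SES f g)
    (e : A' ≅ A) : SES (e.hom ≫ f) g := by
  rw [ses_iff] at h ⊢
  have he : Function.Bijective e.hom := (ConcreteCategory.isIso_iff_bijective e.hom).1 inferInstance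
  refine ⟨h.1.comp he.1, fun x => (h.2.1 x).trans ⟨?_, ?_⟩, h.2.2⟩
  · rintro ⟨a, rfl⟩
    obtain ⟨b, rfl⟩ := he.2 a
    exact ⟨b, rfl⟩
  · rintro ⟨a, rfl⟩
    exact ⟨e.hom a, rfl⟩

lemma IsGProj.coresolve {𝓣 : Set (ModuleCat.{0} R)} {M : ModuleCat.{0} R} (h : IsGProj 𝓣 M) :
    ∃ (P M' : ModuleCat.{0} R) (f : M ⟶ P) (g : P ⟶ M'),
      Projective P ∧ SES f g ∧ IsGProj 𝓣 M' := by
  obtain ⟨C, hC, n, ⟨e⟩⟩ := h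
  obtain ⟨g, hg, hs⟩ := ses_cyc hC.exact n (n - 1) (by omega)
  exact ⟨C.X n, _, _, g, hC.projective n, ses_iso_left hs e, C, hC, n - 1, ⟨Iso.refl _⟩⟩

/-- A relation total on both sides admits a two-sided infinite chain through any point. -/
lemma exists_biseq {α : Type*} (r : α → α → Prop) (hl : ∀ a, ∃ b, r b a) (hr : ∀ a, ∃ b, r a b)
    (a : α) : ∃ Z : ℤ → α, Z 0 = a ∧ ∀ n, r (Z (n + 1)) (Z n) := by
  choose l hl using hl
  choose s hs using hr
  refine ⟨fun n => Int.rec (fun k => l^[k] a) (fun k => s^[k + 1] a) n, rfl, fun n => ?_⟩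
  rcases n with k | k
  · change r (l^[k + 1] a) (l^[k] a)
    rw [Function.iterate_succ_apply']
    exact hl _
  · rcases k with _ | k
    · exact hs a
    · change r (s^[k + 1] a) (s^[k + 1 + 1] a)
      rw [Function.iterate_succ_apply' s (k + 1)]
      exact hs _

/-- The closure of a class of modules under syzygies, i.e. kernels of epimorphisms from
projective modules. -/
inductive SyzClosure (𝓧 : Set (ModuleCat.{0} R)) : ModuleCat.{0} R → Prop
  | of {M : ModuleCat.{0} R} (h : M ∈ 𝓧) : SyzClosure 𝓧 M
  | syz {A P C : ModuleCat.{0} R} (f : A ⟶ P) (g : P ⟶ C) (hP : Projective P) (h : SES f g)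
      (hC : SyzClosure 𝓧 C) : SyzClosure 𝓧 A

/-- A family of short exact sequences `0 → Z_{n+1} → P_n → Z_n → 0` indexed by `ℤ`, with `P_n`
projective and `Z_n` left orthogonal to `𝓣`, splices to a complete resolution of `Z_0`. -/
lemma isGProj_of_splice {𝓣 : Set (ModuleCat.{0} R)} (Z P : ℤ → ModuleCat.{0} R)
    (i : ∀ n, Z (n + 1) ⟶ P n) (p : ∀ n, P n ⟶ Z n) (hs : ∀ n, SES (i n) (p n))
    (hP : ∀ n, Projective (P n)) (hZ : ∀ n, ExtPerp 𝓣 (Z n)) : IsGProj 𝓣 (Z 0) := by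
  have hz : ∀ n, i n ≫ p n = 0 := fun n => (hs n).choose
  have hmono : ∀ n, Mono (i n) := fun n => (hs n).choose_spec.mono_f
  have hepi : ∀ n, Epi (p n) := fun n => (hs n).choose_spec.epi_g
  let C : ChainComplex (ModuleCat.{0} R) ℤ := ChainComplex.of P (fun n => p (n + 1) ≫ i n)
    (fun n => by rw [Category.assoc, reassoc_of% (hz (n + 1)), zero_comp, comp_zero])
  have hd : ∀ n, C.d (n + 1) n = p (n + 1) ≫ i n := fun n =>
    ChainComplex.of_d (X := P) (d := fun n => p (n + 1) ≫ i n) n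
  refine ⟨C, ⟨hP, fun n => ?_, ?_⟩, ?_⟩
  · obtain ⟨m, rfl⟩ : ∃ m, n = m + 1 := ⟨n - 1, by omega⟩
    change C.ExactAt (m + 1)
    rw [HomologicalComplex.exactAt_iff' C (m + 1 + 1) (m + 1) m
      ((ComplexShape.down ℤ).prev_eq' rfl) ((ComplexShape.down ℤ).next_eq' rfl),
      ShortComplex.moduleCat_exact_iff]
    intro x hx
    change C.d (m + 1) m x = 0 at hx
    change ∃ y, C.d (m + 1 + 1) (m + 1) y = x
    simp only [hd] at hx ⊢
    have h1 := (ses_iff _ _).1 (hs m)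
    have h2 := (ses_iff _ _).1 (hs (m + 1))
    have hx' : p (m + 1) x = 0 := h1.1 (by rw [map_zero]; exact hx)
    obtain ⟨z, rfl⟩ := (h2.2.1 x).1 hx'
    obtain ⟨y, rfl⟩ := ((ses_iff _ _).1 (hs (m + 1 + 1))).2.2 z
    exact ⟨y, rfl⟩
  · intro T hT n g hg
    obtain ⟨m, rfl⟩ : ∃ m, n = m + 1 := ⟨n - 1, by omega⟩
    rw [hd, Category.assoc] at hg
    have hg' : i (m + 1) ≫ g = 0 := by
      rw [← cancel_epi (p (m + 1 + 1)), hg, comp_zero]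
    obtain ⟨v, rfl⟩ := ses_desc (hs (m + 1)) g hg'
    obtain ⟨u, rfl⟩ := ses_extend (hs m) (hZ m T hT 0) v
    have : ∀ c, c = m → ∃ h : C.X c ⟶ T, C.d (m + 1) c ≫ h = p (m + 1) ≫ i m ≫ u := by
      rintro c rfl
      exact ⟨u, by rw [hd, Category.assoc]⟩
    exact this _ (by omega)
  · have key : ∀ m a d c : ℤ, a = m + 1 + 1 → d = m + 1 → c = m →
        Nonempty (Z a ≅ kernel (C.d d c)) := by
      rintro _ _ _ m rfl rfl rfl
      have hk : IsLimit (KernelFork.ofι (i (m + 1)) (hz (m + 1))) :=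
        (hs (m + 1)).choose_spec.exact.fIsKernel
      rw [hd]
      exact ⟨hk.conePointUniqueUpToIso (kernelIsKernel _) ≪≫ (kernelCompMono _ _).symm⟩
    exact ⟨-1, key (-2) 0 (-1) (-1 - 1) (by norm_num) (by norm_num) (by norm_num)⟩

/-- Coinduction principle: a class of modules left orthogonal to `𝓣`, each of whose members embeds
in a projective with cokernel again in the class, consists of Gorenstein projectives. -/
lemma isGProj_of_coresolving {𝓣 : Set (ModuleCat.{0} R)} (𝓧 : Set (ModuleCat.{0} R))
    (hE : ∀ M ∈ 𝓧, ExtPerp 𝓣 M)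
    (hC : ∀ M ∈ 𝓧, ∃ (P M' : ModuleCat.{0} R) (f : M ⟶ P) (g : P ⟶ M'),
      Projective P ∧ SES f g ∧ M' ∈ 𝓧) (M : ModuleCat.{0} R) (hM : M ∈ 𝓧) : IsGProj 𝓣 M := by
  have hE' : ∀ M, SyzClosure 𝓧 M → ExtPerp 𝓣 M := by
    intro M h
    induction h with
    | of h => exact hE _ h
    | syz f g hP h hC ih => exact extPerp_left h (extPerp_of_projective 𝓣 _) ih
  let r : {M // SyzClosure 𝓧 M} → {M // SyzClosure 𝓧 M} → Prop := fun A C =>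
    ∃ (P : ModuleCat.{0} R) (f : A.1 ⟶ P) (g : P ⟶ C.1), Projective P ∧ SES f g
  obtain ⟨Z, hZ0, hZ⟩ := exists_biseq r
    (by
      rintro ⟨C, hC⟩
      have hs := ses_ker (Projective.π C) ((ModuleCat.epi_iff_surjective _).1 inferInstance)
      have hP : Projective (Projective.over C) := inferInstance
      exact ⟨⟨_, .syz _ _ hP hs hC⟩, _, _, _, hP, hs⟩)
    (by
      rintro ⟨A, hA⟩
      cases hA with
      | of h =>
        obtain ⟨P, M', f, g, hP, hs, hM'⟩ := hC A h
        exact ⟨⟨M', .of hM'⟩, P, f, g, hP, hs⟩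
      | syz f g hP h hC => exact ⟨⟨_, hC⟩, _, f, g, hP, h⟩)
    ⟨M, .of hM⟩
  choose P i p hP hs using hZ
  have := isGProj_of_splice (𝓣 := 𝓣) (fun n => (Z n).1) P i p hs hP fun n => hE' _ (Z n).2
  simpa only [hZ0] using this

lemma isGProj_of_projective {𝓣 : Set (ModuleCat.{0} R)} (P : ModuleCat.{0} R)
    (hP : Projective P) : IsGProj 𝓣 P := by
  refine isGProj_of_coresolving {Q | Projective Q}
    (fun M (hM : Projective M) => extPerp_of_projective 𝓣 M) (fun M hM => ?_) P hP
  have h0 : Projective (ModuleCat.of R PUnit.{1}) :=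
    ⟨fun _ _ _ => ⟨0, (ModuleCat.isZero_of_subsingleton _).eq_of_src _ _⟩⟩
  refine ⟨M, ModuleCat.of R PUnit.{1}, 𝟙 M, 0, hM, ?_, h0⟩
  rw [ses_iff]
  exact ⟨fun _ _ h => h, fun x => ⟨fun _ => ⟨x, rfl⟩, fun _ => rfl⟩, fun y => ⟨0, rfl⟩⟩

/-- Kernels of epimorphisms from projectives to Gorenstein projectives are Gorenstein projective. -/
lemma isGProj_of_embed {𝓣 : Set (ModuleCat.{0} R)} {A P D : ModuleCat.{0} R} {f : A ⟶ P}
    {g : P ⟶ D} (h : SES f g) (hP : Projective P) (hD : IsGProj 𝓣 D) : IsGProj 𝓣 A := by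
  refine isGProj_of_coresolving (insert A {M | IsGProj 𝓣 M}) ?_ ?_ A (Set.mem_insert _ _)
  · rintro M (rfl | hM)
    · exact extPerp_left h (extPerp_of_projective 𝓣 _) hD.extPerp
    · exact IsGProj.extPerp hM
  · rintro M (rfl | hM)
    · exact ⟨P, D, f, g, hP, h, Set.mem_insert_of_mem _ hD⟩
    · obtain ⟨P, M', f, g, hP, hs, hM'⟩ := IsGProj.coresolve hM
      exact ⟨P, M', f, g, hP, hs, Set.mem_insert_of_mem _ hM'⟩

/-! ### Closure properties -/

/-- Horseshoe: embeddings of the outer terms of a short exact sequence into projectives combine to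
an embedding of the middle term, provided the first one extends along `f`. The cokernels then
form a short exact sequence as well. -/
lemma horseshoe {A B C P Q A' C' : ModuleCat.{0} R} {f : A ⟶ B} {g : B ⟶ C} (h : SES f g)
    {i : A ⟶ P} {p : P ⟶ A'} (hi : SES i p) {j : C ⟶ Q} {q : Q ⟶ C'} (hj : SES j q)
    (v : B ⟶ P) (hv : f ≫ v = i) :
    ∃ (B' : ModuleCat.{0} R) (k : B ⟶ ModuleCat.of R (P × Q))
      (l : ModuleCat.of R (P × Q) ⟶ B') (f' : A' ⟶ B') (g' : B' ⟶ C'), SES k l ∧ SES f' g' := by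
  have h' := (ses_iff _ _).1 h
  have hi' := (ses_iff _ _).1 hi
  have hj' := (ses_iff _ _).1 hj
  have hv' : ∀ a, v (f a) = i a := fun a => by rw [← hv]; rfl
  have hgf : ∀ a, g (f a) = 0 := fun a => (h'.2.1 _).2 ⟨a, rfl⟩
  let k : B ⟶ ModuleCat.of R (P × Q) := ModuleCat.ofHom (v.hom.prod (g ≫ j).hom)
  have hk : ∀ b, k b = (v b, j (g b)) := fun b => rfl
  have hkinj : Function.Injective k := by
    rw [injective_iff_map_eq_zero]
    intro b hb
    rw [hk, Prod.mk_eq_zero] at hb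
    obtain ⟨a, rfl⟩ := (h'.2.1 b).1 (hj'.1 (by rw [hb.2, map_zero]))
    rw [hv'] at hb
    rw [hi'.1 (hb.1.trans (map_zero _).symm), map_zero]
  have hkl := ses_mkQ k hkinj
  set l := ModuleCat.ofHom (LinearMap.range k.hom).mkQ
  have hkl' := (ses_iff _ _).1 hkl
  have hlk : ∀ b, l (v b, j (g b)) = 0 := fun b => (hkl'.2.1 _).2 ⟨b, rfl⟩
  obtain ⟨f', hf'⟩ := ses_desc hi (ModuleCat.ofHom (LinearMap.inl R P Q) ≫ l) (by
    ext a
    change l (i a, 0) = 0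
    have := hlk (f a)
    rwa [hv', hgf, map_zero] at this)
  obtain ⟨g', hg'⟩ := ses_desc hkl (ModuleCat.ofHom (LinearMap.snd R P Q) ≫ q) (by
    ext b
    exact (hj'.2.1 _).2 ⟨g b, rfl⟩)
  have hf'' : ∀ x, f' (p x) = l (x, 0) := fun x => congr($hf' x)
  have hg'' : ∀ x y, g' (l (x, y)) = q y := fun x y => congr($hg' (x, y))
  refine ⟨_, k, l, f', g', hkl, (ses_iff _ _).2 ⟨?_, fun z => ⟨fun hz => ?_, ?_⟩, fun z => ?_⟩⟩
  · rw [injective_iff_map_eq_zero]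
    intro a ha
    obtain ⟨x, rfl⟩ := hi'.2.2 a
    rw [hf''] at ha
    obtain ⟨b, hb⟩ := (hkl'.2.1 _).1 ha
    rw [hk, Prod.mk.injEq] at hb
    obtain ⟨a, rfl⟩ := (h'.2.1 b).1 (hj'.1 (by rw [hb.2, map_zero]))
    exact (hi'.2.1 _).2 ⟨a, by rw [← hb.1, hv']⟩
  · obtain ⟨⟨x, y⟩, rfl⟩ := hkl'.2.2 z
    rw [hg''] at hz
    obtain ⟨c, rfl⟩ := (hj'.2.1 _).1 hz
    obtain ⟨b, rfl⟩ := h'.2.2 c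
    refine ⟨p (x - v b), ?_⟩
    rw [hf'', ← sub_eq_zero, ← map_sub, ← neg_eq_zero, ← map_neg, ← hlk b]
    congr 1
    ext <;> simp
  · rintro ⟨a, rfl⟩
    obtain ⟨x, rfl⟩ := hi'.2.2 a
    rw [hf'', hg'', map_zero]
  · obtain ⟨y, rfl⟩ := hj'.2.2 z
    exact ⟨l (0, y), hg'' _ _⟩

lemma projective_prod (P Q : ModuleCat.{0} R) (hP : Projective P) (hQ : Projective Q) :
    Projective (ModuleCat.of R (P × Q)) := by
  rw [← IsProjective.iff_projective] at *
  infer_instance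

lemma isGProj_ext {𝓛 : Set (ModuleCat.{0} R)} {𝓐 : Set (ModuleCat.{0} Rᵐᵒᵖ)}
    (hdp : CompleteDualityPair 𝓛 𝓐) {A B C : ModuleCat.{0} R} {f : A ⟶ B} {g : B ⟶ C}
    (h : SES f g) (hA : IsGProj 𝓛 A) (hC : IsGProj 𝓛 C) : IsGProj 𝓛 B := by
  refine isGProj_of_coresolving {B | ∃ (A C : ModuleCat.{0} R) (f : A ⟶ B) (g : B ⟶ C),
    SES f g ∧ IsGProj 𝓛 A ∧ IsGProj 𝓛 C} ?_ ?_ B ⟨A, C, f, g, h, hA, hC⟩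
  · rintro B ⟨A, C, f, g, h, hA, hC⟩
    exact extPerp_mid h hA.extPerp hC.extPerp
  · rintro B ⟨A, C, f, g, h, hA, hC⟩
    obtain ⟨P, A', i, p, hP, hi, hA'⟩ := hA.coresolve
    obtain ⟨Q, C', j, q, hQ, hj, hC'⟩ := hC.coresolve
    -- `P ∈ 𝓛`, so `Ext¹(C, P) = 0` and the embedding of `A` extends to `B`.
    obtain ⟨v, hv⟩ := ses_extend h (hC.extPerp P (projective_mem hdp P) 0) i
    obtain ⟨B', k, l, f', g', hkl, hfg⟩ := horseshoe h hi hj v hv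
    exact ⟨_, B', k, l, projective_prod P Q hP hQ, hkl, A', C', f', g', hfg, hA', hC'⟩

/-- If `B` embeds in a projective `P` with Gorenstein projective cokernel `B'`, then `P / A` is an
extension of `B'` by `C`, so it is Gorenstein projective and `isGProj_of_embed` applies to
`0 → A → P → P / A → 0`. -/
lemma isGProj_ker {𝓛 : Set (ModuleCat.{0} R)} {𝓐 : Set (ModuleCat.{0} Rᵐᵒᵖ)}
    (hdp : CompleteDualityPair 𝓛 𝓐) {A B C : ModuleCat.{0} R} {f : A ⟶ B} {g : B ⟶ C}
    (h : SES f g) (hB : IsGProj 𝓛 B) (hC : IsGProj 𝓛 C) : IsGProj 𝓛 A := by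
  obtain ⟨P, B', i, p, hP, hi, hB'⟩ := hB.coresolve
  have h' := (ses_iff _ _).1 h
  have hi' := (ses_iff _ _).1 hi
  have hfi := ses_mkQ (f ≫ i) (hi'.1.comp h'.1)
  set l := ModuleCat.ofHom (LinearMap.range (f ≫ i).hom).mkQ
  have hfi' := (ses_iff _ _).1 hfi
  refine isGProj_of_embed hfi hP ?_
  -- The cokernel `D` of `A → B → P` is an extension `0 → C → D → B' → 0`.
  obtain ⟨u, hu⟩ := ses_desc h (i ≫ l) (by
    ext a
    exact (hfi'.2.1 _).2 ⟨a, rfl⟩)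
  obtain ⟨w, hw⟩ := ses_desc hfi p (by
    ext a
    exact (hi'.2.1 _).2 ⟨f a, rfl⟩)
  have hu' : ∀ b, u (g b) = l (i b) := fun b => congr($hu b)
  have hw' : ∀ x, w (l x) = p x := fun x => congr($hw x)
  refine isGProj_ext hdp (f := u) (g := w)
    ((ses_iff _ _).2 ⟨?_, fun z => ⟨fun hz => ?_, ?_⟩, fun z => ?_⟩) hC hB'
  · rw [injective_iff_map_eq_zero]
    intro c hc
    obtain ⟨b, rfl⟩ := h'.2.2 c
    rw [hu'] at hc
    obtain ⟨a, ha⟩ := (hfi'.2.1 _).1 hc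
    exact (h'.2.1 _).2 ⟨a, hi'.1 ha⟩
  · obtain ⟨x, rfl⟩ := hfi'.2.2 z
    rw [hw'] at hz
    obtain ⟨b, rfl⟩ := (hi'.2.1 _).1 hz
    exact ⟨g b, hu' b⟩
  · rintro ⟨c, rfl⟩
    obtain ⟨b, rfl⟩ := h'.2.2 c
    rw [hu', hw']
    exact (hi'.2.1 _).2 ⟨b, rfl⟩
  · obtain ⟨x, rfl⟩ := hi'.2.2 z
    exact ⟨l x, hw' x⟩

lemma isGProj_prod {𝓛 : Set (ModuleCat.{0} R)} {𝓐 : Set (ModuleCat.{0} Rᵐᵒᵖ)}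
    (hdp : CompleteDualityPair 𝓛 𝓐) {A B : ModuleCat.{0} R}
    (hA : IsGProj 𝓛 A) (hB : IsGProj 𝓛 B) : IsGProj 𝓛 (ModuleCat.of R (A × B)) := by
  refine isGProj_ext hdp (f := ModuleCat.ofHom (LinearMap.inl R A B))
    (g := ModuleCat.ofHom (LinearMap.snd R A B)) ((ses_iff _ _).2 ⟨LinearMap.inl_injective,
      fun x => ⟨fun hx => ⟨x.1, ?_⟩, ?_⟩, LinearMap.snd_surjective⟩) hA hB
  · change (x.1, 0) = x
    exact Prod.ext rfl (Eq.symm hx)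
  · rintro ⟨a, rfl⟩
    rfl

lemma isGProj_of_iso {𝓣 : Set (ModuleCat.{0} R)} {M N : ModuleCat.{0} R} (e : M ≅ N)
    (h : IsGProj 𝓣 N) : IsGProj 𝓣 M := by
  obtain ⟨C, hC, n, ⟨e₁⟩⟩ := h
  exact ⟨C, hC, n, ⟨e ≪≫ e₁⟩⟩

/-! ### Comparing resolutions -/

/-- The kernel of an epimorphism `K × P → G`, with `P` projective and `G` Gorenstein projective,
has resolution dimension at most that of `K`. -/
lemma resDimLE_ker {𝓛 : Set (ModuleCat.{0} R)} {𝓐 : Set (ModuleCat.{0} Rᵐᵒᵖ)}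
    (hdp : CompleteDualityPair 𝓛 𝓐) (n : ℕ) {A K P G : ModuleCat.{0} R}
    (hK : ResDimLE {G : ModuleCat.{0} R | IsGProj 𝓛 G} n K) (hP : Projective P)
    (hG : IsGProj 𝓛 G) {f : A ⟶ ModuleCat.of R (K × P)} {g : ModuleCat.of R (K × P) ⟶ G}
    (h : SES f g) : ResDimLE {G : ModuleCat.{0} R | IsGProj 𝓛 G} n A := by
  have hP' := isGProj_of_projective (𝓣 := 𝓛) P hP
  cases n with
  | zero => exact isGProj_ker hdp h (isGProj_prod hdp hK hP') hG
  | succ n =>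
    obtain ⟨K', G', i, p, hG', hi, hK'⟩ := hK
    have h' := (ses_iff _ _).1 h
    have hi' := (ses_iff _ _).1 hi
    let t : ModuleCat.of R (G' × P) ⟶ ModuleCat.of R (K × P) :=
      ModuleCat.ofHom (p.hom.prodMap LinearMap.id)
    have ht : ∀ x y, t (x, y) = (p x, y) := fun x y => rfl
    have htg : Function.Surjective (t ≫ g) := by
      refine h'.2.2.comp ?_
      rintro ⟨x, y⟩
      obtain ⟨z, rfl⟩ := hi'.2.2 x
      exact ⟨(z, y), rfl⟩
    -- The kernel of `G' × P → K × P → G` is Gorenstein projective and surjects onto `A`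
    -- with kernel `K'`.
    have hE := ses_ker (t ≫ g) htg
    have hE' := (ses_iff _ _).1 hE
    set e := ModuleCat.ofHom (LinearMap.ker (t ≫ g).hom).subtype
    obtain ⟨u, hu⟩ := ses_lift hE (i ≫ ModuleCat.ofHom (LinearMap.inl R G' P)) (by
      ext x
      change g (p (i x), 0) = 0
      rw [(hi'.2.1 _).2 ⟨x, rfl⟩]
      exact map_zero g.hom)
    obtain ⟨w, hw⟩ := ses_lift h (e ≫ t) (by
      rw [Category.assoc]
      exact hE.choose)
    have hu' : ∀ x, e (u x) = (i x, 0) := fun x => congr($hu x)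
    have hw' : ∀ x, f (w x) = t (e x) := fun x => congr($hw x)
    refine ⟨K', _, u, w, isGProj_ker hdp hE (isGProj_prod hdp hG' hP') hG,
      (ses_iff _ _).2 ⟨?_, fun z => ⟨fun hz => ?_, ?_⟩, fun a => ?_⟩, hK'⟩
    · intro x y hxy
      have := congrArg e hxy
      rw [hu', hu', Prod.mk.injEq] at this
      exact hi'.1 this.1
    · have h1 : t (e z) = 0 := by rw [← hw', hz, map_zero]
      obtain ⟨⟨x, y⟩, hxy⟩ : ∃ q : G' × P, e z = q := ⟨_, rfl⟩
      rw [hxy, ht, Prod.mk_eq_zero] at h1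
      obtain ⟨k, rfl⟩ := (hi'.2.1 _).1 h1.1
      exact ⟨k, hE'.1 (by rw [hu', hxy, h1.2])⟩
    · rintro ⟨k, rfl⟩
      apply h'.1
      rw [hw', hu', ht, (hi'.2.1 _).2 ⟨k, rfl⟩, map_zero]
      rfl
    · obtain ⟨⟨x, y⟩, hxy⟩ : ∃ q : K × P, f a = q := ⟨_, rfl⟩
      obtain ⟨z, rfl⟩ := hi'.2.2 x
      obtain ⟨b, hb⟩ := (hE'.2.1 (z, y)).1 (by
        change g (p z, y) = 0
        rw [← hxy]
        exact (h'.2.1 _).2 ⟨a, rfl⟩)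
      exact ⟨b, h'.1 (by rw [hw', hb, ht, hxy])⟩

/-- A Schanuel-type comparison: for short exact sequences `0 → K → G → M → 0` and
`0 → S → P → M → 0` with `P` projective, there is one of the form `0 → S → K × P → G → 0`. -/
lemma exists_ses_prod {M K G S P : ModuleCat.{0} R} {f : K ⟶ G} {g : G ⟶ M} (h : SES f g)
    {i : S ⟶ P} {p : P ⟶ M} (hi : SES i p) (hP : Projective P) :
    ∃ (u : S ⟶ ModuleCat.of R (K × P)) (v : ModuleCat.of R (K × P) ⟶ G), SES u v := by
  have h' := (ses_iff _ _).1 h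
  have hi' := (ses_iff _ _).1 hi
  have : Epi g := (ModuleCat.epi_iff_surjective g).2 h'.2.2
  obtain ⟨s, hs⟩ : ∃ s : P ⟶ G, s ≫ g = p := ⟨_, Projective.factorThru_comp p g⟩
  obtain ⟨r, hr⟩ := ses_lift h (i ≫ s) (by rw [Category.assoc, hs]; exact hi.choose)
  have hs' : ∀ x, g (s x) = p x := fun x => congr($hs x)
  have hr' : ∀ x, f (r x) = s (i x) := fun x => congr($hr x)
  let u : S ⟶ ModuleCat.of R (K × P) := ModuleCat.ofHom ((-r.hom).prod i.hom)
  let v : ModuleCat.of R (K × P) ⟶ G := ModuleCat.ofHom (f.hom.coprod s.hom)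
  have hu : ∀ x, u x = (-r x, i x) := fun x => rfl
  have hv : ∀ x y, v (x, y) = f x + s y := fun x y => rfl
  refine ⟨u, v, (ses_iff _ _).2 ⟨?_, ?_, fun z => ?_⟩⟩
  · intro x y hxy
    rw [hu, hu, Prod.mk.injEq] at hxy
    exact hi'.1 hxy.2
  · rintro ⟨k, x⟩
    constructor
    · intro hx
      rw [hv] at hx
      have h1 : p x = 0 := by
        have h2 := congrArg g hx
        rwa [map_add, (h'.2.1 (f k)).2 ⟨k, rfl⟩, zero_add, hs', map_zero] at h2
      obtain ⟨y, rfl⟩ := (hi'.2.1 _).1 h1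
      refine ⟨y, ?_⟩
      rw [hu, Prod.mk.injEq]
      refine ⟨h'.1 ?_, rfl⟩
      rw [map_neg, hr', neg_eq_iff_add_eq_zero, add_comm, hx]
    · rintro ⟨y, hy⟩
      rw [← hy, hu, hv, map_neg, hr', neg_add_cancel]
  · obtain ⟨x, hx⟩ := hi'.2.2 (g z)
    obtain ⟨k, hk⟩ := (h'.2.1 (z - s x)).1 (by rw [map_sub, hs', hx, sub_self])
    exact ⟨(k, x), by rw [hv, hk, sub_add_cancel]⟩

theorem stmt10
    (R : Type) [Ring R] (𝓛 : Set (ModuleCat.{0} R)) (𝓐 : Set (ModuleCat.{0} Rᵐᵒᵖ))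
    (hdp : CompleteDualityPair 𝓛 𝓐) (M : ModuleCat.{0} R) (n : ℕ)
    (hres : ResDimLE {G : ModuleCat.{0} R | IsGProj 𝓛 G} n M) :
    ∀ K : ModuleCat.{0} R,
      IsNthSyzygy {P : ModuleCat.{0} R | Projective P} n M K → IsGProj 𝓛 K := by
  induction n generalizing M with
  | zero =>
    rintro K ⟨e⟩
    exact isGProj_of_iso e hres
  | succ n ih =>
    rintro K ⟨S, P, i, p, hP, hi, hK⟩
    obtain ⟨K₁, G, f, g, hG, hfg, hK₁⟩ := hres
    obtain ⟨u, v, huv⟩ := exists_ses_prod hfg hi hP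
    exact ih S (resDimLE_ker hdp n hK₁ hP hG huv) K hK

end DualityPaper
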